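/- Let Z = Z₀ ⊕ Z₁ be a nonzero finite-dimensional Zinbiel superalgebra over a field. Then there exists a nonzero homogeneous element e ∈ Z₀ ∪ Z₁ such that e·Z = 0. -/

import Mathlib

open Module Submodule

/-- A Zinbiel superalgebra over a field `K`: a `K`-vector space `Z` with a bilinear
multiplication and a direct sum decomposition `Z = Z₀ ⊕ Z₁` such that
`Zᵢ·Zⱼ ⊆ Z_{i+j (mod 2)}` and, for all homogeneous `x, y, z`,
`(x·y)·z = x·(y·z + (−1)^{|y||z|} z·y)`. -/
structure ZinbielSuper (K : Type*) [Field K] (Z : Type*) [AddCommGroup Z] [Module K Z] where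
  mul : Z →ₗ[K] Z →ₗ[K] Z
  Z0 : Submodule K Z
  Z1 : Submodule K Z
  compl : IsCompl Z0 Z1
  mul00 : ∀ x ∈ Z0, ∀ y ∈ Z0, mul x y ∈ Z0
  mul01 : ∀ x ∈ Z0, ∀ y ∈ Z1, mul x y ∈ Z1
  mul10 : ∀ x ∈ Z1, ∀ y ∈ Z0, mul x y ∈ Z1
  mul11 : ∀ x ∈ Z1, ∀ y ∈ Z1, mul x y ∈ Z0
  zinb_even : ∀ x y z : Z, (x ∈ Z0 ∨ x ∈ Z1) → (y ∈ Z0 ∨ y ∈ Z1) → (z ∈ Z0 ∨ z ∈ Z1) →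
    (y ∈ Z0 ∨ z ∈ Z0) → mul (mul x y) z = mul x (mul y z + mul z y)
  zinb_odd : ∀ x y z : Z, (x ∈ Z0 ∨ x ∈ Z1) → y ∈ Z1 → z ∈ Z1 →
    mul (mul x y) z = mul x (mul y z - mul z y)

variable {K : Type*} [Field K] {Z : Type*} [AddCommGroup Z] [Module K Z]

/-- The linear span of all products `a·b` with `a ∈ A`, `b ∈ B`. -/
def mulSub (mul : Z →ₗ[K] Z →ₗ[K] Z) (A B : Submodule K Z) : Submodule K Z :=
  Submodule.span K {z : Z | ∃ a ∈ A, ∃ b ∈ B, mul a b = z}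

namespace ZinbielSuper

/-- Right multiplication by `z`. -/
def R (S : ZinbielSuper K Z) (z : Z) : Module.End K Z := S.mul.flip z

theorem R_apply (S : ZinbielSuper K Z) (z x : Z) : S.R z x = S.mul x z := rfl

theorem R_add (S : ZinbielSuper K Z) (y z : Z) : S.R (y + z) = S.R y + S.R z := by
  simp [R]

theorem R_smul (S : ZinbielSuper K Z) (c : K) (z : Z) : S.R (c • z) = c • S.R z := by
  simp [R]

theorem decomp (S : ZinbielSuper K Z) (x : Z) : ∃ a ∈ S.Z0, ∃ b ∈ S.Z1, a + b = x := by
  have h : x ∈ S.Z0 ⊔ S.Z1 := by rw [S.compl.sup_eq_top]; trivial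
  exact Submodule.mem_sup.1 h

theorem even_comp (S : ZinbielSuper K Z) {y z : Z} (hy : y ∈ S.Z0) (hz : z ∈ S.Z0) :
    S.R z * S.R y = S.R (S.mul y z + S.mul z y) := by
  ext x
  obtain ⟨a, ha, b, hb, rfl⟩ := S.decomp x
  have h1 := S.zinb_even a y z (Or.inl ha) (Or.inl hy) (Or.inl hz) (Or.inl hy)
  have h2 := S.zinb_even b y z (Or.inr hb) (Or.inl hy) (Or.inl hz) (Or.inl hy)
  rw [Module.End.mul_apply, map_add, map_add, map_add]
  simp only [R_apply]
  rw [h1, h2]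

theorem idem_zero (S : ZinbielSuper K Z) {u : Z} (hu : u ∈ S.Z0)
    (h : S.R u * S.R u = S.R u) : S.R u = 0 := by
  have hv : S.mul u u ∈ S.Z0 := S.mul00 u hu u hu
  have h2 := S.even_comp hu hu
  have h3 := S.even_comp hv hu
  have h4 : S.mul (S.mul u u) u = S.mul u u := by
    have := congrArg (fun f => f u) h
    simpa [R_apply] using this
  have h5 : S.mul (S.mul u u) u = S.mul u (S.mul u u) + S.mul u (S.mul u u) := by
    have := S.zinb_even u u u (Or.inl hu) (Or.inl hu) (Or.inl hu) (Or.inl hu)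
    simpa using this
  rw [h] at h2
  rw [R_add] at h2 h3
  have h6 : S.R (S.mul u u) = S.R (S.mul u (S.mul u u)) + S.R (S.mul u (S.mul u u)) := by
    rw [← R_add, ← h5, h4]
  rw [h4] at h3
  have h7 : S.R u = S.R (S.mul u u) + S.R (S.mul u (S.mul u u))
      + (S.R (S.mul u u) + S.R (S.mul u (S.mul u u))) := by
    rw [← h3, ← mul_add, ← h2, h]
  have h8 : S.R (S.mul u u) = 0 := by
    have e : S.R (S.mul u u) + S.R (S.mul u u) + 0
        = S.R (S.mul u u) + S.R (S.mul u u) + S.R (S.mul u u) := by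
      rw [add_zero]
      calc _ = S.R u := h2.symm
        _ = _ := h7
        _ = S.R (S.mul u u) + S.R (S.mul u u) +
            (S.R (S.mul u (S.mul u u)) + S.R (S.mul u (S.mul u u))) := by abel
        _ = _ := by rw [← h6]
    exact (add_left_cancel e).symm
  rw [h2, h8, add_zero]

theorem poly_mem (S : ZinbielSuper K Z) {e : Z} (he : e ∈ S.Z0) (q : Polynomial K) :
    ∃ u ∈ S.Z0, S.R u = S.R e * Polynomial.aeval (S.R e) q := by
  induction q using Polynomial.induction_on with
  | C a => exact ⟨a • e, S.Z0.smul_mem _ he, by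
      rw [R_smul, Polynomial.aeval_C, Algebra.algebraMap_eq_smul_one, mul_smul_comm, mul_one]⟩
  | add p q hp hq =>
    obtain ⟨u, hu, h1⟩ := hp
    obtain ⟨v, hv, h2⟩ := hq
    exact ⟨u + v, S.Z0.add_mem hu hv, by rw [R_add, h1, h2, map_add, mul_add]⟩
  | monomial n a h =>
    obtain ⟨u, hu, h1⟩ := h
    refine ⟨_, S.Z0.add_mem (S.mul00 e he u hu) (S.mul00 u hu e he), ?_⟩
    rw [← S.even_comp he hu, h1]
    simp only [map_mul, map_pow, Polynomial.aeval_X, pow_succ, mul_assoc]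

theorem even_nilp [FiniteDimensional K Z] (S : ZinbielSuper K Z) {e : Z} (he : e ∈ S.Z0) :
    IsNilpotent (S.R e) := by
  set T := S.R e with hT
  have hm : minpoly K T ≠ 0 := minpoly.ne_zero (Algebra.IsIntegral.isIntegral T)
  obtain ⟨g, hg, hnd⟩ := Polynomial.exists_eq_pow_rootMultiplicity_mul_and_not_dvd
    (minpoly K T) hm 0
  rw [map_zero, sub_zero] at hg hnd
  set k := Polynomial.rootMultiplicity 0 (minpoly K T)
  have hco : IsCoprime (Polynomial.X ^ (k + 1) : Polynomial K) g :=
    IsCoprime.pow_left ((Polynomial.irreducible_X.coprime_iff_not_dvd).2 hnd)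
  obtain ⟨a, b, hab⟩ := hco
  have hz : Polynomial.aeval T (Polynomial.X ^ (k+1) * g) = 0 := by
    have : (Polynomial.X ^ (k+1) * g : Polynomial K) = Polynomial.X * minpoly K T := by
      rw [hg]; ring
    rw [this, map_mul, minpoly.aeval, mul_zero]
  obtain ⟨u, hu, hP⟩ := S.poly_mem he (a * Polynomial.X ^ k)
  have hP' : S.R u = Polynomial.aeval T (a * Polynomial.X ^ (k+1)) := by
    have : a * Polynomial.X ^ (k+1) = Polynomial.X * (a * Polynomial.X ^ k) := by ring
    rw [hP, this, map_mul _ Polynomial.X, Polynomial.aeval_X]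
  have hid : S.R u * S.R u = S.R u := by
    have : a * Polynomial.X ^ (k+1) * (a * Polynomial.X ^ (k+1))
        = a * Polynomial.X ^ (k+1) - a * b * (Polynomial.X ^ (k+1) * g) := by
      linear_combination (a * Polynomial.X ^ (k+1)) * hab
    rw [hP', ← map_mul, this, map_sub, map_mul _ (a * b), hz, mul_zero, sub_zero]
  have h0 := S.idem_zero hu hid
  refine ⟨k + 1, ?_⟩
  have : (Polynomial.X ^ (k+1) : Polynomial K)
      = Polynomial.X ^ (k+1) * (a * Polynomial.X ^ (k+1)) + b * (Polynomial.X ^ (k+1) * g) := by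
    linear_combination (-Polynomial.X ^ (k+1)) * hab
  have h2 := congrArg (Polynomial.aeval T) this
  rw [map_add, map_mul _ (Polynomial.X ^ (k+1)), map_mul _ b, hz, ← hP', h0] at h2
  simpa using h2

theorem odd_nilp (S : ZinbielSuper K Z) {z : Z} (hz : z ∈ S.Z1) : IsNilpotent (S.R z) := by
  refine ⟨2, ?_⟩
  ext x
  obtain ⟨a, ha, b, hb, rfl⟩ := S.decomp x
  have h1 := S.zinb_odd a z z (Or.inl ha) hz hz
  have h2 := S.zinb_odd b z z (Or.inr hb) hz hz
  rw [pow_two, Module.End.mul_apply, map_add, map_add]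
  simp only [R_apply]
  rw [h1, h2]
  simp

theorem hom_mul (S : ZinbielSuper K Z) {x z : Z} (hx : x ∈ S.Z0 ∨ x ∈ S.Z1)
    (hz : z ∈ S.Z0 ∨ z ∈ S.Z1) : S.mul x z ∈ S.Z0 ∨ S.mul x z ∈ S.Z1 := by
  rcases hx with hx | hx <;> rcases hz with hz | hz
  · exact Or.inl (S.mul00 x hx z hz)
  · exact Or.inr (S.mul01 x hx z hz)
  · exact Or.inr (S.mul10 x hx z hz)
  · exact Or.inl (S.mul11 x hx z hz)

theorem kill (S : ZinbielSuper K Z) {x y z : Z} (hx : x ∈ S.Z0 ∨ x ∈ S.Z1)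
    (hy : y ∈ S.Z0 ∨ y ∈ S.Z1) (hz : z ∈ S.Z0 ∨ z ∈ S.Z1) (h : S.mul x y = 0) :
    S.mul (S.mul x z) y = 0 := by
  by_cases hc : y ∈ S.Z0 ∨ z ∈ S.Z0
  · have h1 := S.zinb_even x y z hx hy hz hc
    rw [S.zinb_even x z y hx hz hy hc.symm, add_comm, ← h1, h]
    simp
  · push Not at hc
    have hy1 := hy.resolve_left hc.1
    have hz1 := hz.resolve_left hc.2
    have h1 := S.zinb_odd x y z hx hy1 hz1
    rw [S.zinb_odd x z y hx hz1 hy1, ← neg_sub, map_neg, ← h1, h]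
    simp

theorem exists_kill [FiniteDimensional K Z] [Nontrivial Z] (S : ZinbielSuper K Z) (s : Finset Z)
    (hs : ∀ y ∈ s, y ∈ S.Z0 ∨ y ∈ S.Z1) :
    ∃ e : Z, e ≠ 0 ∧ (e ∈ S.Z0 ∨ e ∈ S.Z1) ∧ ∀ y ∈ s, S.mul e y = 0 := by
  classical
  induction s using Finset.induction_on with
  | empty =>
    obtain ⟨x, hx⟩ := exists_ne (0 : Z)
    obtain ⟨a, ha, b, hb, rfl⟩ := S.decomp x
    by_cases h : a = 0
    · subst h
      exact ⟨b, by simpa using hx, Or.inr hb, by simp⟩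
    · exact ⟨a, h, Or.inl ha, by simp⟩
  | insert z s hzs ih =>
    obtain ⟨e, he, heh, hes⟩ := ih (fun y hy => hs y (Finset.mem_insert_of_mem hy))
    have hz := hs z (Finset.mem_insert_self _ _)
    have hn : IsNilpotent (S.R z) := hz.elim S.even_nilp S.odd_nilp
    have hex : ∃ n, (S.R z ^ n) e = 0 := by
      obtain ⟨n, hn⟩ := hn
      exact ⟨n, by rw [hn]; rfl⟩
    have key : ∀ n, ((S.R z ^ n) e ∈ S.Z0 ∨ (S.R z ^ n) e ∈ S.Z1) ∧
        ∀ y ∈ s, S.mul ((S.R z ^ n) e) y = 0 := by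
      intro n
      induction n with
      | zero => simpa using ⟨heh, hes⟩
      | succ n ihn =>
        rw [pow_succ', Module.End.mul_apply, R_apply]
        exact ⟨S.hom_mul ihn.1 hz, fun y hy =>
          S.kill ihn.1 (hs y (Finset.mem_insert_of_mem hy)) hz (ihn.2 y hy)⟩
    have hspec := Nat.find_spec hex
    have hmin := fun m => Nat.find_min hex (m := m)
    generalize Nat.find hex = N at hspec hmin
    cases N with
    | zero => exact absurd (by simpa using hspec) he
    | succ n =>
      refine ⟨(S.R z ^ n) e, hmin n (Nat.lt_succ_self n), (key n).1, ?_⟩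
      intro y hy
      rcases Finset.mem_insert.1 hy with rfl | hy
      · rw [pow_succ', Module.End.mul_apply, R_apply] at hspec
        exact hspec
      · exact (key n).2 y hy

end ZinbielSuper

/-- Every nonzero finite-dimensional Zinbiel superalgebra has a nonzero homogeneous
element `e` with `e·Z = 0`. -/
theorem exists_homogeneous_leftAnn (K : Type*) [Field K] (Z : Type*) [AddCommGroup Z]
    [Module K Z] [FiniteDimensional K Z] [Nontrivial Z] (S : ZinbielSuper K Z) :
    ∃ e : Z, e ≠ 0 ∧ (e ∈ S.Z0 ∨ e ∈ S.Z1) ∧ ∀ x : Z, S.mul e x = 0 := by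
  classical
  obtain ⟨s0, h0⟩ := (IsNoetherian.noetherian S.Z0 : S.Z0.FG)
  obtain ⟨s1, h1⟩ := (IsNoetherian.noetherian S.Z1 : S.Z1.FG)
  obtain ⟨e, he, heh, hk⟩ := S.exists_kill (s0 ∪ s1) (by
    intro y hy
    rcases Finset.mem_union.1 hy with hy | hy
    · left; rw [← h0]; exact Submodule.subset_span hy
    · right; rw [← h1]; exact Submodule.subset_span hy)
  refine ⟨e, he, heh, fun x => ?_⟩
  have l0 : S.Z0 ≤ LinearMap.ker (S.mul e) := by
    rw [← h0, Submodule.span_le]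
    exact fun y hy => hk y (Finset.mem_union_left _ hy)
  have l1 : S.Z1 ≤ LinearMap.ker (S.mul e) := by
    rw [← h1, Submodule.span_le]
    exact fun y hy => hk y (Finset.mem_union_right _ hy)
  obtain ⟨a, ha, b, hb, rfl⟩ := S.decomp x
  rw [map_add, LinearMap.mem_ker.1 (l0 ha), LinearMap.mem_ker.1 (l1 hb), add_zero]
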